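/- arXiv:math/0305158 — 6 statements merged into one kernel-verified Lean document; each statement's English description precedes it below -/
import Mathlib

section
/- Let n ≥ 1, let f : Sⁿ → Sⁿ be a continuous map, and suppose there are points p, q ∈ Sⁿ such that f⁻¹({p}) = {q} (the point p has exactly one preimage under f). Then there exists a continuous injective map g : Sⁿ → Sⁿ × ℝⁿ such that Prod.fst ∘ g = f and g(q) = (p, 0). (Since Sⁿ is compact, such a g is automatically a topological embedding.) -/
/-- The complement of a point of the `n`-sphere injects continuously into the unit ball
of `ℝⁿ`. -/
theorem exists_continuousOn_injOn_compl_singleton_sphere (n : ℕ)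
    (q : Metric.sphere (0 : EuclideanSpace ℝ (Fin (n + 1))) 1) :
    ∃ β : Metric.sphere (0 : EuclideanSpace ℝ (Fin (n + 1))) 1 → EuclideanSpace ℝ (Fin n),
      ContinuousOn β {q}ᶜ ∧ Set.InjOn β {q}ᶜ ∧ ∀ x, ‖β x‖ ≤ 1 := by
  have := Fact.mk (finrank_euclideanSpace_fin (𝕜 := ℝ) (n := n + 1))
  let e := (stereographic' n q).trans OpenPartialHomeomorph.univUnitBall
  have he : e.source = {q}ᶜ := by
    simp [e, OpenPartialHomeomorph.univUnitBall]
  refine ⟨e, he ▸ e.continuousOn, he ▸ e.injOn, fun x => ?_⟩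
  have hx : e x ∈ Metric.ball (0 : EuclideanSpace ℝ (Fin n)) 1 :=
    OpenPartialHomeomorph.univUnitBall.map_source (Set.mem_univ (stereographic' n q x))
  exact (mem_ball_zero_iff.mp hx).le

/-- If `p` has the single preimage `q` under `f`, and the complement of `q` admits a bounded
continuous injection into a normed space `E`, then `f` lifts to a continuous injection into
the product with `E`. -/
theorem exists_continuous_injective_lift {X Y E : Type*} [TopologicalSpace X] [T1Space X]
    [MetricSpace Y] [NormedAddCommGroup E] [NormedSpace ℝ E] {f : X → Y} (hf : Continuous f)
    {p : Y} {q : X} (hpq : f ⁻¹' {p} = {q}) {β : X → E} {C : ℝ} (hβ : ContinuousOn β {q}ᶜ)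
    (hinj : Set.InjOn β {q}ᶜ) (hbound : ∀ x, ‖β x‖ ≤ C) :
    ∃ g : X → Y × E, Continuous g ∧ Function.Injective g ∧ (∀ x, (g x).1 = f x) ∧
      g q = (p, 0) := by
  have hiff (x : X) : f x = p ↔ x = q := Set.ext_iff.mp hpq x
  have hq : f q = p := (hiff q).mpr rfl
  have hdist : Continuous fun x => dist (f x) p := hf.dist continuous_const
  refine ⟨fun x => (f x, dist (f x) p • β x), hf.prodMk ?_, ?_, fun _ => rfl, by simp [hq]⟩
  · refine continuous_iff_continuousAt.mpr fun x => ?_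
    by_cases hx : x = q
    · subst hx
      have hzero : Filter.Tendsto (fun x => dist (f x) p) (nhds x) (nhds 0) := by
        simpa [hq] using hdist.tendsto x
      simpa [ContinuousAt, hq] using hzero.zero_smul_isBoundedUnder_le
        (Filter.isBoundedUnder_of ⟨C, hbound⟩)
    · exact hdist.continuousAt.smul (hβ.continuousAt (isOpen_compl_singleton.mem_nhds hx))
  · intro x y hxy
    obtain ⟨hfxy, hsmul⟩ := Prod.mk.inj hxy
    by_cases hx : x = q
    · exact hx.trans ((hiff y).mp (hfxy ▸ (hiff x).mpr hx)).symm
    · have hfx : f x ≠ p := mt (hiff x).mp hx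
      have hy : y ≠ q := mt (hiff y).mpr (hfxy ▸ hfx)
      rw [← hfxy] at hsmul
      exact hinj hx hy (smul_right_injective E (dist_ne_zero.mpr hfx) hsmul)

/-- Example 2: if some point p ∈ Sⁿ has exactly one preimage q under a
continuous map f : Sⁿ → Sⁿ, then f lifts to an embedding g : Sⁿ → Sⁿ × ℝⁿ with
g(q) = (p, 0). -/
theorem map_with_single_preimage_lifts_to_embedding (n : ℕ) (hn : 1 ≤ n)
    (f : Metric.sphere (0 : EuclideanSpace ℝ (Fin (n + 1))) 1 →
         Metric.sphere (0 : EuclideanSpace ℝ (Fin (n + 1))) 1)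
    (hf : Continuous f)
    (p q : Metric.sphere (0 : EuclideanSpace ℝ (Fin (n + 1))) 1)
    (hpq : f ⁻¹' {p} = {q}) :
    ∃ g : Metric.sphere (0 : EuclideanSpace ℝ (Fin (n + 1))) 1 →
        Metric.sphere (0 : EuclideanSpace ℝ (Fin (n + 1))) 1 × EuclideanSpace ℝ (Fin n),
      Continuous g ∧ Function.Injective g ∧
      (∀ x, (g x).1 = f x) ∧ g q = (p, 0) := by
  obtain ⟨β, hβ, hinj, hbound⟩ := exists_continuousOn_injOn_compl_singleton_sphere n q
  exact exists_continuous_injective_lift hf hpq hβ hinj hbound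
end

section
/- Let n ≥ 1. Every continuous map f : Sⁿ → ℝⁿ is realizable in ℝ^{2n}: for every ε > 0 there exists a continuous injective map g : Sⁿ → ℝⁿ × ℝⁿ such that dist(g(x), (f(x), 0)) < ε for all x ∈ Sⁿ. (Since Sⁿ is compact, such a g is automatically a topological embedding.) -/
/-- Orthogonal projection along a unit vector of `ℝⁿ⁺¹`, in coordinates of the complement. -/
theorem exists_projection_along_unit {n : ℕ} (p : EuclideanSpace ℝ (Fin (n + 1)))
    (hp : ‖p‖ = 1) :
    ∃ P : EuclideanSpace ℝ (Fin (n + 1)) →L[ℝ] EuclideanSpace ℝ (Fin n),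
      ∀ x, ‖P x‖ ^ 2 = ‖x‖ ^ 2 - inner ℝ p x ^ 2 := by
  have hp0 : p ≠ 0 := by
    rintro rfl
    simp at hp
  have : Fact (Module.finrank ℝ (EuclideanSpace ℝ (Fin (n + 1))) = n + 1) := ⟨by simp⟩
  let b := OrthonormalBasis.fromOrthogonalSpanSingleton (𝕜 := ℝ) n hp0
  refine ⟨b.repr.toContinuousLinearEquiv.toContinuousLinearMap.comp
    (ℝ ∙ p)ᗮ.orthogonalProjectionOnto, fun x => ?_⟩
  have h := Submodule.norm_sq_eq_add_norm_sq_projection x (ℝ ∙ p)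
  have h' : ‖(ℝ ∙ p).orthogonalProjectionOnto x‖ ^ 2 = inner ℝ p x ^ 2 := by
    rw [← Submodule.norm_coe, ← Submodule.starProjection_apply,
      Submodule.starProjection_unit_singleton ℝ hp, norm_smul, hp, mul_one, Real.norm_eq_abs,
      sq_abs]
  have h'' : ‖b.repr ((ℝ ∙ p)ᗮ.orthogonalProjectionOnto x)‖ ^ 2
      = ‖(ℝ ∙ p)ᗮ.orthogonalProjectionOnto x‖ ^ 2 := by
    rw [b.repr.norm_map]
  change ‖b.repr ((ℝ ∙ p)ᗮ.orthogonalProjectionOnto x)‖ ^ 2 = _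
  linarith

/-- The radial profile `(1 - s²) / (1 - min s c)²` takes each value at most once on each side
of `c`. -/
theorem eq_of_radial_profile_eq {c s t : ℝ} (hc0 : 0 ≤ c) (hc1 : c < 1)
    (hst : (s ≤ c ∧ t ≤ c) ∨ (c ≤ s ∧ c ≤ t))
    (h : (1 - s ^ 2) / (1 - min s c) ^ 2 = (1 - t ^ 2) / (1 - min t c) ^ 2) : s = t := by
  rcases hst with ⟨hs, ht⟩ | ⟨hs, ht⟩
  · rw [min_eq_left hs, min_eq_left ht] at h
    have hs1 : 0 < 1 - s := by linarith
    have ht1 : 0 < 1 - t := by linarith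
    rw [div_eq_div_iff (by positivity) (by positivity)] at h
    have key : (1 - s) * (1 - t) * (2 * (s - t)) = 0 := by linear_combination h
    have := (mul_eq_zero.mp key).resolve_left (mul_pos hs1 ht1).ne'
    linarith
  · rw [min_eq_right hs, min_eq_right ht] at h
    have hc : (1 - c) ^ 2 ≠ 0 := pow_ne_zero 2 (by linarith)
    have h2 := (div_left_inj' hc).mp h
    exact (sq_eq_sq₀ (hc0.trans hs) (hc0.trans ht)).mp (by linarith)

/-- Example 2, first claim: every continuous map f : Sⁿ → ℝⁿ is realizable
in ℝ^{2n} = ℝⁿ × ℝⁿ: the map x ↦ (f(x), 0) is approximable by (topological) embeddings. -/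
theorem map_sphere_to_euclidean_realizable (n : ℕ) (hn : 1 ≤ n)
    (f : Metric.sphere (0 : EuclideanSpace ℝ (Fin (n + 1))) 1 → EuclideanSpace ℝ (Fin n))
    (hf : Continuous f) (ε : ℝ) (hε : 0 < ε) :
    ∃ g : Metric.sphere (0 : EuclideanSpace ℝ (Fin (n + 1))) 1 →
        EuclideanSpace ℝ (Fin n) × EuclideanSpace ℝ (Fin n),
      Continuous g ∧ Function.Injective g ∧
      ∀ x, dist (g x) ((f x, (0 : EuclideanSpace ℝ (Fin n)))) < ε := by
  let i : Fin n := ⟨0, hn⟩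
  have hfi : Continuous fun x => f x i := by fun_prop
  have : Nonempty (Metric.sphere (0 : EuclideanSpace ℝ (Fin (n + 1))) 1) :=
    (NormedSpace.sphere_nonempty.mpr zero_le_one).to_subtype
  -- The pole `p` maximizes one coordinate of `f`; on the cap `c ≤ ⟪p, x⟫` that coordinate is
  -- replaced by a function exceeding all its values outside the cap.
  obtain ⟨p, hpmax⟩ : ∃ p, ∀ x, f x i ≤ f p i := by
    obtain ⟨p, -, hp⟩ := isCompact_univ.exists_isMaxOn Set.univ_nonempty hfi.continuousOn
    exact ⟨p, fun x => hp (Set.mem_univ x)⟩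
  have hnorm : ∀ x : Metric.sphere (0 : EuclideanSpace ℝ (Fin (n + 1))) 1,
      ‖(x : EuclideanSpace ℝ (Fin (n + 1)))‖ = 1 := fun x => by simp
  obtain ⟨P, hP⟩ := exists_projection_along_unit (p : EuclideanSpace ℝ (Fin (n + 1))) (hnorm p)
  obtain ⟨s, hs⟩ : ∃ s : Metric.sphere (0 : EuclideanSpace ℝ (Fin (n + 1))) 1 → ℝ,
      ∀ x, s x = inner ℝ (p : EuclideanSpace ℝ (Fin (n + 1))) x := ⟨_, fun _ => rfl⟩
  have hscont : Continuous s := by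
    rw [funext hs]
    fun_prop
  have hs1 : ∀ x, s x ≤ 1 := fun x => by
    have := real_inner_le_norm (p : EuclideanSpace ℝ (Fin (n + 1))) x
    rwa [hnorm, hnorm, one_mul, ← hs] at this
  have hPs : ∀ x : Metric.sphere (0 : EuclideanSpace ℝ (Fin (n + 1))) 1,
      ‖P x‖ ^ 2 = 1 - s x ^ 2 := fun x => by rw [hP, hnorm, hs, one_pow]
  obtain ⟨a, ha⟩ : ∃ a, a = f p i - ε / 2 := ⟨_, rfl⟩
  obtain ⟨c, hc0, hc1, hcε, hca⟩ : ∃ c : ℝ, 0 ≤ c ∧ c < 1 ∧ 1 - c ≤ ε / 2 ∧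
      ∀ x, c ≤ s x → a ≤ f x i := by
    obtain ⟨r, hr, hball⟩ := Metric.continuous_iff.mp hfi p (ε / 2) (by positivity)
    refine ⟨max 0 (max (1 - ε / 2) (1 - r ^ 2 / 4)), le_max_left _ _, ?_, ?_, fun x hx => ?_⟩
    · have : 0 < r ^ 2 := by positivity
      refine max_lt one_pos (max_lt ?_ ?_) <;> linarith
    · have := (le_max_left (1 - ε / 2) (1 - r ^ 2 / 4)).trans (le_max_right 0 _)
      linarith
    · have hx' := ((le_max_right (1 - ε / 2) (1 - r ^ 2 / 4)).trans (le_max_right 0 _)).trans hx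
      have hd : dist x p < r := by
        have hsq := norm_sub_sq_real (x : EuclideanSpace ℝ (Fin (n + 1))) p
        rw [hnorm, hnorm, real_inner_comm, ← hs, ← dist_eq_norm] at hsq
        rw [Subtype.dist_eq]
        refine lt_of_pow_lt_pow_left₀ 2 hr.le ?_
        nlinarith [sq_pos_of_pos hr]
      have := hball x hd
      rw [Real.dist_eq, abs_lt] at this
      linarith
  have hden : ∀ x, 1 - c ≤ 1 - min (s x) c := fun x => by
    linarith [min_le_right (s x) c]
  have hden0 : ∀ x, 0 < 1 - min (s x) c := fun x => by linarith [hden x]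
  let F : Metric.sphere (0 : EuclideanSpace ℝ (Fin (n + 1))) 1 → EuclideanSpace ℝ (Fin n) :=
    fun x => f x + (min (f x i) a + max (s x - c) 0 - f x i) • EuclideanSpace.single i 1
  have hF : ∀ x, F x i = min (f x i) a + max (s x - c) 0 := fun x => by simp [F]
  let k : ℝ := ε / 2 * (1 - c)
  have hk : 0 < k := mul_pos (by positivity) (by linarith)
  let h : Metric.sphere (0 : EuclideanSpace ℝ (Fin (n + 1))) 1 → EuclideanSpace ℝ (Fin n) :=
    fun x => (k / (1 - min (s x) c)) • P x
  have hnormh : ∀ x, ‖h x‖ ^ 2 = k ^ 2 * ((1 - s x ^ 2) / (1 - min (s x) c) ^ 2) := fun x => by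
    simp only [h]
    rw [norm_smul, mul_pow, hPs, Real.norm_eq_abs, sq_abs, div_pow, div_mul_eq_mul_div,
      mul_div_assoc]
  have hinj : ∀ x y, (s x ≤ c ∧ s y ≤ c) ∨ (c ≤ s x ∧ c ≤ s y) → h x = h y → x = y := by
    intro x y hxy hhxy
    have hst : s x = s y := by
      refine eq_of_radial_profile_eq hc0 hc1 hxy ?_
      refine mul_left_cancel₀ (pow_ne_zero 2 hk.ne') ?_
      rw [← hnormh, ← hnormh, hhxy]
    have hPxy : P x = P y := by
      simp only [h, hst] at hhxy
      exact smul_right_injective _ (div_pos hk (hden0 y)).ne' hhxy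
    have hsub := hP ((x : EuclideanSpace ℝ (Fin (n + 1))) - y)
    rw [map_sub, hPxy, sub_self, inner_sub_right, ← hs, ← hs, hst] at hsub
    have hzero : ‖(x : EuclideanSpace ℝ (Fin (n + 1))) - y‖ ^ 2 = 0 := by simpa using hsub.symm
    exact Subtype.ext (sub_eq_zero.mp (norm_eq_zero.mp (pow_eq_zero_iff two_ne_zero |>.mp hzero)))
  have hsep : ∀ x y, c < s x → s y ≤ c → F x ≠ F y := by
    intro x y hx hy hxy
    have hi := hF x
    rw [hxy, hF y, min_eq_right (hca x hx.le), max_eq_right (by linarith),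
      max_eq_left (by linarith)] at hi
    linarith [min_le_right (f y i) a]
  refine ⟨fun x => (F x, h x), ?_, ?_, fun x => ?_⟩
  · refine Continuous.prodMk (by fun_prop) ?_
    refine Continuous.smul (continuous_const.div (by fun_prop) fun x => (hden0 x).ne') ?_
    fun_prop
  · intro x y hxy
    obtain ⟨hFxy, hhxy⟩ := Prod.mk.inj hxy
    rcases le_or_gt (s x) c with hx | hx <;> rcases le_or_gt (s y) c with hy | hy
    · exact hinj x y (.inl ⟨hx, hy⟩) hhxy
    · exact absurd hFxy.symm (hsep y x hy hx)
    · exact absurd hFxy (hsep x y hx hy)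
    · exact hinj x y (.inr ⟨hx.le, hy.le⟩) hhxy
  · refine max_lt ?_ ?_
    · have habs : |min (f x i) a + max (s x - c) 0 - f x i| ≤ ε / 2 := by
        have := hpmax x
        have := hs1 x
        rw [abs_le]
        constructor <;>
          rcases min_cases (f x i) a with ⟨h₁, _⟩ | ⟨h₁, _⟩ <;>
          rcases max_cases (s x - c) 0 with ⟨h₂, _⟩ | ⟨h₂, _⟩ <;> linarith
      have hdist : dist (F x) (f x) = |min (f x i) a + max (s x - c) 0 - f x i| := by
        simp [F, dist_eq_norm, norm_smul]
      change dist (F x) (f x) < ε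
      linarith
    · have hP1 : ‖P x‖ ≤ 1 := by
        have := hPs x
        exact (sq_le_one_iff₀ (norm_nonneg _)).mp (by nlinarith [sq_nonneg (s x)])
      have hk1 : k / (1 - min (s x) c) ≤ ε / 2 := by
        rw [div_le_iff₀ (hden0 x)]
        exact mul_le_mul_of_nonneg_left (hden x) (by positivity)
      change dist (h x) 0 < ε
      rw [dist_zero_right]
      simp only [h]
      rw [norm_smul, Real.norm_of_nonneg (div_pos hk (hden0 x)).le]
      calc _ ≤ ε / 2 * 1 := mul_le_mul hk1 hP1 (norm_nonneg _) (by positivity)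
        _ < ε := by linarith
end

section
/- Let f, g : [0,1] → [0,1] be continuous maps with f(0) = 0, g(0) = 0, f(1) = 1 and g(1) = 1. Then the points (0,0) and (1,1) belong to the same connected component of the set { (x,y) ∈ [0,1] × [0,1] : f(x) = g(y) }, taken with the subspace topology of [0,1] × [0,1]. -/
open unitInterval

/-- Points of a compact set `K` in different components of `K` are separated by a continuous
function on the ambient space which is `{0, 1}`-valued on `K`. -/
theorem exists_continuous_zero_one_of_notMem_connectedComponentIn {X : Type*} [TopologicalSpace X]
    [T2Space X] [NormalSpace X] {K : Set X} (hK : IsCompact K) {a b : X} (ha : a ∈ K) (hb : b ∈ K)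
    (hab : b ∉ connectedComponentIn K a) :
    ∃ u : C(X, ℝ), u a = 0 ∧ u b = 1 ∧ ∀ z ∈ K, u z = 0 ∨ u z = 1 := by
  have : CompactSpace K := isCompact_iff_compactSpace.mp hK
  have hb' : (⟨b, hb⟩ : K) ∉ connectedComponent (⟨a, ha⟩ : K) := fun h ↦
    hab (by rw [connectedComponentIn_eq_image ha]; exact ⟨_, h, rfl⟩)
  rw [connectedComponent_eq_iInter_isClopen] at hb'
  simp only [Set.mem_iInter, Subtype.forall, not_forall] at hb'
  obtain ⟨Z, ⟨hZ, haZ⟩, hbZ⟩ := hb'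
  have hemb := hK.isClosed.isClosedEmbedding_subtypeVal
  obtain ⟨u, hu0, hu1, -⟩ := exists_continuous_zero_one_of_isClosed
    (hemb.isClosedMap Z hZ.isClosed) (hemb.isClosedMap Zᶜ hZ.compl.isClosed)
    ((Set.disjoint_image_iff Subtype.val_injective).mpr disjoint_compl_right)
  refine ⟨u, hu0 ⟨_, haZ, rfl⟩, hu1 ⟨_, hbZ, rfl⟩, fun z hz ↦ ?_⟩
  by_cases h : (⟨z, hz⟩ : K) ∈ Z
  · exact .inl (hu0 ⟨_, h, rfl⟩)
  · exact .inr (hu1 ⟨_, h, rfl⟩)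

/-- If `h ≤ 0` on the left and top edges of the unit square and `0 ≤ h` on the bottom and right
edges, then no function on the square which is `{0, 1}`-valued on the zero set of `h` separates
the corners `(0, 0)` and `(1, 1)`. Otherwise `u / 2` where `0 ≤ h` and `-u / 2` where `h ≤ 0`
would glue to a map from the square to the circle of nonzero degree on the boundary. -/
theorem unitInterval.not_separated_corners {h : I × I → ℝ} (hh : Continuous h)
    (left : ∀ y, h (0, y) ≤ 0) (top : ∀ x, h (x, 1) ≤ 0)
    (bottom : ∀ x, 0 ≤ h (x, 0)) (right : ∀ y, 0 ≤ h (1, y))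
    (u : C(I × I, ℝ)) (u0 : u (0, 0) = 0) (u1 : u (1, 1) = 1)
    (hu : ∀ z, h z = 0 → u z = 0 ∨ u z = 1) : False := by
  have cov := AddCircle.isCoveringMap_coe (1 : ℝ)
  have half : ((-(1 / 2 : ℝ) : ℝ) : AddCircle (1 : ℝ)) = ((1 / 2 : ℝ) : AddCircle (1 : ℝ)) := by
    rw [← AddCircle.coe_add_period (1 : ℝ) (-(1 / 2))]
    norm_num
  have glue (z) (hz : h z = 0) :
      ((-(u z / 2) : ℝ) : AddCircle (1 : ℝ)) = ((u z / 2 : ℝ) : AddCircle (1 : ℝ)) := by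
    rcases hu z hz with h | h <;> rw [h]
    · simp
    · exact half
  let φ : C(I × I, AddCircle (1 : ℝ)) :=
    ⟨fun z ↦ if h z ≤ 0 then ((-(u z / 2) : ℝ) : AddCircle (1 : ℝ)) else ((u z / 2 : ℝ) :),
      Continuous.if_le (cov.continuous.comp (by fun_prop)) (cov.continuous.comp (by fun_prop))
        hh continuous_const glue⟩
  have φ_neg (z) (hz : h z ≤ 0) : φ z = ((-(u z / 2) : ℝ) : AddCircle (1 : ℝ)) := if_pos hz
  have φ_pos (z) (hz : 0 ≤ h z) : φ z = ((u z / 2 : ℝ) : AddCircle (1 : ℝ)) := by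
    rcases hz.eq_or_lt with hz | hz
    · rw [φ_neg z hz.ge, glue z hz.symm]
    · exact if_neg hz.not_ge
  let F := cov.liftHomotopy φ ⟨fun y ↦ -(u (0, y) / 2), by fun_prop⟩
    (fun y ↦ φ_neg _ (left y))
  have F_lifts (z) : ((F z : ℝ) : AddCircle (1 : ℝ)) = φ z :=
    congrFun (cov.liftHomotopy_lifts φ _ _) z
  have F_left (y) : F (0, y) = -(u (0, y) / 2) := cov.liftHomotopy_zero φ _ _ y
  have F_top := cov.eq_of_comp_eq (g₁ := fun x ↦ F (x, 1)) (g₂ := fun x ↦ -(u (x, 1) / 2))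
    (by fun_prop) (by fun_prop) (funext fun x ↦ (F_lifts _).trans (φ_neg _ (top x))) 0 (F_left 1)
  have F_bottom := cov.eq_of_comp_eq (g₁ := fun x ↦ F (x, 0)) (g₂ := fun x ↦ u (x, 0) / 2)
    (by fun_prop) (by fun_prop) (funext fun x ↦ (F_lifts _).trans (φ_pos _ (bottom x))) 0
    (by simp [F_left, u0])
  have F_right := cov.eq_of_comp_eq (g₁ := fun y ↦ F (1, y)) (g₂ := fun y ↦ u (1, y) / 2)
    (by fun_prop) (by fun_prop) (funext fun y ↦ (F_lifts _).trans (φ_pos _ (right y))) 0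
    (congrFun F_bottom 1)
  have h₁ := congrFun F_top 1
  have h₂ := congrFun F_right 1
  simp only [u1] at h₁ h₂
  linarith

/-- Lemma 1: if f, g : [0,1] → [0,1] are continuous with f(0) = g(0) = 0 and
f(1) = g(1) = 1, then (0,0) and (1,1) lie in the same connected component of
{ (x,y) : f(x) = g(y) } ⊂ [0,1] × [0,1]. -/
theorem double_point_component_lemma (f g : unitInterval → unitInterval)
    (hf : Continuous f) (hg : Continuous g)
    (hf0 : f 0 = 0) (hg0 : g 0 = 0) (hf1 : f 1 = 1) (hg1 : g 1 = 1) :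
    ((1, 1) : unitInterval × unitInterval) ∈
      connectedComponentIn {z : unitInterval × unitInterval | f z.1 = g z.2}
        ((0, 0) : unitInterval × unitInterval) := by
  by_contra hcon
  have hK : IsClosed {z : I × I | f z.1 = g z.2} := isClosed_eq (by fun_prop) (by fun_prop)
  obtain ⟨u, u0, u1, hu⟩ := exists_continuous_zero_one_of_notMem_connectedComponentIn
    hK.isCompact (hf0.trans hg0.symm) (hf1.trans hg1.symm) hcon
  refine unitInterval.not_separated_corners (h := fun z ↦ (f z.1 : ℝ) - g z.2) (by fun_prop)
    (fun y ↦ ?_) (fun x ↦ ?_) (fun x ↦ ?_) (fun y ↦ ?_) u u0 u1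
    (fun z hz ↦ hu z (Subtype.ext (sub_eq_zero.mp hz)))
  · simpa [hf0] using (g y).2.1
  · simpa [hg1] using (f x).2.2
  · simpa [hg0] using (f x).2.1
  · simpa [hf1] using (g y).2.2
end

section
/- Let n ≥ 1 and fix p ∈ Sⁿ. Let S̃ⁿ = { (x,y) ∈ Sⁿ × Sⁿ : x ≠ y } with the subspace topology (the deleted product of Sⁿ). Then there exists a continuous map φ : S̃ⁿ → Sⁿ which is a homotopy equivalence, is equivariant in the sense that φ(y,x) = −φ(x,y) for all (x,y) ∈ S̃ⁿ, and satisfies φ⁻¹({p, −p}) = ({p} × (Sⁿ \ {p})) ∪ ((Sⁿ \ {p}) × {p}). -/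
open Metric unitInterval

section SphereDeletedProduct

variable {E : Type*} [NormedAddCommGroup E] [InnerProductSpace ℝ E]

/-- The radial projection of a nonzero vector to the unit sphere. -/
noncomputable def sphereNormalize (v : E) (hv : v ≠ 0) : sphere (0 : E) 1 :=
  ⟨‖v‖⁻¹ • v, by simp [norm_smul, hv]⟩

theorem Continuous.sphereNormalize {X : Type*} [TopologicalSpace X] {f : X → E}
    (hf : Continuous f) (h0 : ∀ x, f x ≠ 0) :
    Continuous fun x => sphereNormalize (f x) (h0 x) :=
  ((hf.norm.inv₀ fun x => norm_ne_zero_iff.2 (h0 x)).smul hf).subtype_mk _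

theorem sphereNormalize_eq_of_eq_smul {v : E} {x : sphere (0 : E) 1} {c : ℝ}
    (hc : 0 < c) (h : v = c • (x : E)) :
    sphereNormalize v (h ▸ smul_ne_zero hc.ne' (ne_zero_of_mem_unit_sphere x)) = x := by
  ext1
  simp [sphereNormalize, h, norm_smul, abs_of_pos hc, smul_smul, hc.ne']

theorem sphereNormalize_neg {v : E} (hv : v ≠ 0) (hv' : -v ≠ 0) :
    sphereNormalize (-v) hv' = -sphereNormalize v hv := by
  ext1
  simp [sphereNormalize]

theorem norm_smul_sphereNormalize {v : E} (hv : v ≠ 0) :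
    ‖v‖ • (sphereNormalize v hv : E) = v := by
  simp [sphereNormalize, smul_smul, hv]

theorem ne_zero_of_inner_ne_zero {v d : E} (h : inner ℝ v d ≠ 0) : v ≠ 0 := by
  rintro rfl
  simp at h

theorem sphereNormalize_ne_of_inner {v w d : E}
    (hvd : 0 < inner ℝ v d) (hwd : inner ℝ w d < 0) :
    sphereNormalize v (ne_zero_of_inner_ne_zero hvd.ne') ≠
      sphereNormalize w (ne_zero_of_inner_ne_zero hwd.ne) := by
  intro h
  have hv := norm_smul_sphereNormalize (ne_zero_of_inner_ne_zero hvd.ne')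
  have hw := norm_smul_sphereNormalize (ne_zero_of_inner_ne_zero hwd.ne)
  rw [h] at hv
  generalize sphereNormalize w _ = u at hv hw
  rw [← hv, real_inner_smul_left] at hvd
  rw [← hw, real_inner_smul_left] at hwd
  exact hwd.not_ge (mul_nonneg (norm_nonneg w) (pos_of_mul_pos_right hvd (norm_nonneg v)).le)

theorem inner_sphere_self (x : sphere (0 : E) 1) : inner ℝ (x : E) (x : E) = 1 := by
  simp

theorem inner_sphere_lt_one {x y : sphere (0 : E) 1} (h : x ≠ y) :
    inner ℝ (x : E) (y : E) < 1 :=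
  (inner_lt_one_iff_real_of_norm_eq_one (by simp) (by simp)).2 (Subtype.coe_ne_coe.2 h)

/-- The antisymmetric combination `(1 - ⟪y, p⟫) x - (1 - ⟪x, p⟫) y`. On the unit sphere its component
orthogonal to `p` is a multiple of the difference of the stereographic projections from `p`. -/
noncomputable def weightedDiff (p x y : E) : E :=
  (1 - inner ℝ y p) • x - (1 - inner ℝ x p) • y

theorem weightedDiff_swap (p x y : E) : weightedDiff p y x = -weightedDiff p x y := by
  simp [weightedDiff]

theorem inner_weightedDiff_sub (p : E) (x y : sphere (0 : E) 1) :
    inner ℝ (weightedDiff p (x : E) y) ((x : E) - y) =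
      ((1 - inner ℝ (x : E) p) + (1 - inner ℝ (y : E) p)) * (1 - inner ℝ (x : E) (y : E)) := by
  simp only [weightedDiff, inner_sub_left, inner_sub_right, real_inner_smul_left,
    inner_sphere_self, real_inner_comm (x : E) (y : E)]
  ring

theorem inner_weightedDiff_sub_pos (p : sphere (0 : E) 1) {x y : sphere (0 : E) 1} (h : x ≠ y) :
    0 < inner ℝ (weightedDiff (p : E) (x : E) y) ((x : E) - y) := by
  rw [inner_weightedDiff_sub]
  refine mul_pos ?_ (sub_pos.2 (inner_sphere_lt_one h))
  have hle : ∀ z : sphere (0 : E) 1, inner ℝ (z : E) (p : E) ≤ 1 := fun z => by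
    simpa using real_inner_le_norm (z : E) (p : E)
  by_cases hx : x = p
  · have := inner_sphere_lt_one (fun hy : y = p => h (hx.trans hy.symm))
    linarith [hle x]
  · linarith [hle y, inner_sphere_lt_one hx]

theorem weightedDiff_ne_zero (p : sphere (0 : E) 1) {x y : sphere (0 : E) 1} (h : x ≠ y) :
    weightedDiff (p : E) (x : E) y ≠ 0 :=
  ne_zero_of_inner_ne_zero (inner_weightedDiff_sub_pos p h).ne'

theorem weightedDiff_neg_right (p : E) (x : E) : weightedDiff p x (-x) = (2 : ℝ) • x := by
  simp only [weightedDiff, inner_neg_left]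
  module

/-- If `weightedDiff p x y` lies on the line through `p`, then `x = p` or `y = p`. -/
theorem eq_or_eq_of_weightedDiff_eq_smul {p x y : sphere (0 : E) 1} (h : x ≠ y) {c : ℝ}
    (hc : weightedDiff (p : E) (x : E) y = c • (p : E)) : x = p ∨ y = p := by
  by_contra! hne
  have hx := inner_sphere_lt_one hne.1
  have hy := inner_sphere_lt_one hne.2
  have hq := inner_sphere_lt_one h
  have h₁ := congrArg (fun v => inner ℝ v (p : E)) hc
  have h₂ := congrArg (fun v => inner ℝ v v) hc
  simp only [weightedDiff, inner_sub_left, inner_sub_right, real_inner_smul_left,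
    real_inner_smul_right, inner_sphere_self, real_inner_comm (x : E) (y : E)] at h₁ h₂
  have h₃ : c = inner ℝ (x : E) (p : E) - inner ℝ (y : E) (p : E) := by linarith
  subst h₃
  have := mul_pos (mul_pos (sub_pos.2 hx) (sub_pos.2 hy)) (sub_pos.2 hq)
  linarith

/-- The deleted product of the unit sphere. -/
abbrev SphereDeletedProduct (E : Type*) [NormedAddCommGroup E] :=
  {z : sphere (0 : E) 1 × sphere (0 : E) 1 // z.1 ≠ z.2}

/-- The normalization of `weightedDiff p` as a map from the deleted product to the sphere. -/
noncomputable def deletedProductToSphere (p : sphere (0 : E) 1) :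
    C(SphereDeletedProduct E, sphere (0 : E) 1) where
  toFun z := sphereNormalize (weightedDiff (p : E) (z.1.1 : E) z.1.2) (weightedDiff_ne_zero p z.2)
  continuous_toFun := Continuous.sphereNormalize (by unfold weightedDiff; fun_prop) _

/-- The antidiagonal embedding of the sphere into its deleted product. -/
def sphereAntidiagonal (E : Type*) [NormedAddCommGroup E] [InnerProductSpace ℝ E] :
    C(sphere (0 : E) 1, SphereDeletedProduct E) where
  toFun x := ⟨(x, -x), ne_neg_of_mem_unit_sphere ℝ x⟩
  continuous_toFun := by fun_prop

theorem deletedProductToSphere_comp_antidiagonal (p : sphere (0 : E) 1) :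
    (deletedProductToSphere p).comp (sphereAntidiagonal E) = ContinuousMap.id _ := by
  ext1 x
  exact sphereNormalize_eq_of_eq_smul two_pos (weightedDiff_neg_right (p : E) (x : E))

/-- The segment from `x` to `weightedDiff p x y` stays in the half space of vectors that have
positive inner product with `x - y`. -/
theorem inner_lineMap_weightedDiff_pos (p : sphere (0 : E) 1) (t : I) {x y : sphere (0 : E) 1}
    (h : x ≠ y) :
    0 < inner ℝ ((1 - t : ℝ) • (x : E) + (t : ℝ) • weightedDiff (p : E) (x : E) y)
      ((x : E) - y) := by
  have hF := inner_weightedDiff_sub_pos p h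
  have hq := inner_sphere_lt_one h
  rw [inner_add_left, real_inner_smul_left, real_inner_smul_left, inner_sub_right (x : E),
    inner_sphere_self]
  rcases t.2.1.eq_or_lt with ht | ht
  · simpa [← ht] using hq
  · have := mul_pos ht hF
    have := mul_nonneg (sub_nonneg.2 t.2.2) (sub_pos.2 hq).le
    linarith

theorem inner_lineMap_weightedDiff_neg (p : sphere (0 : E) 1) (t : I) {x y : sphere (0 : E) 1}
    (h : x ≠ y) :
    inner ℝ ((1 - t : ℝ) • (y : E) + (t : ℝ) • weightedDiff (p : E) (y : E) x)
      ((x : E) - y) < 0 := by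
  rw [← neg_sub (y : E), inner_neg_right, neg_lt_zero]
  exact inner_lineMap_weightedDiff_pos p t h.symm

/-- The straight-line homotopy, normalized in each factor, from the identity of the deleted
product to the composite with the antidiagonal embedding. -/
noncomputable def deletedProductHomotopy (p : sphere (0 : E) 1) :
    (ContinuousMap.id (SphereDeletedProduct E)).Homotopy
      ((sphereAntidiagonal E).comp (deletedProductToSphere p)) where
  toFun tz :=
    ⟨(sphereNormalize _ (ne_zero_of_inner_ne_zero
        (inner_lineMap_weightedDiff_pos p tz.1 tz.2.2).ne'),
      sphereNormalize _ (ne_zero_of_inner_ne_zero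
        (inner_lineMap_weightedDiff_neg p tz.1 tz.2.2).ne)),
      sphereNormalize_ne_of_inner (inner_lineMap_weightedDiff_pos p tz.1 tz.2.2)
        (inner_lineMap_weightedDiff_neg p tz.1 tz.2.2)⟩
  continuous_toFun := by
    refine Continuous.subtype_mk (Continuous.prodMk ?_ ?_) _ <;>
      exact Continuous.sphereNormalize (by unfold weightedDiff; fun_prop) _
  map_zero_left z :=
    Subtype.ext <| Prod.ext (sphereNormalize_eq_of_eq_smul one_pos (by simp))
      (sphereNormalize_eq_of_eq_smul one_pos (by simp))
  map_one_left z := by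
    refine Subtype.ext (Prod.ext ?_ ?_)
    · simp [sphereAntidiagonal, deletedProductToSphere]
    · simp [sphereAntidiagonal, deletedProductToSphere, weightedDiff_swap (p : E) (z.1.1 : E),
        sphereNormalize_neg (weightedDiff_ne_zero p z.2)]

theorem deletedProductToSphere_swap (p : sphere (0 : E) 1) {x y : sphere (0 : E) 1} (h : x ≠ y) :
    deletedProductToSphere p ⟨(y, x), h.symm⟩ = -deletedProductToSphere p ⟨(x, y), h⟩ := by
  simp [deletedProductToSphere, weightedDiff_swap (p : E) (x : E),
    sphereNormalize_neg (weightedDiff_ne_zero p h)]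

theorem deletedProductToSphere_left (p : sphere (0 : E) 1) {y : sphere (0 : E) 1} (h : p ≠ y) :
    deletedProductToSphere p ⟨(p, y), h⟩ = p :=
  sphereNormalize_eq_of_eq_smul (sub_pos.2 (inner_sphere_lt_one h.symm))
    (by simp [weightedDiff])

theorem deletedProductToSphere_mem_iff (p : sphere (0 : E) 1) {x y : sphere (0 : E) 1}
    (h : x ≠ y) :
    deletedProductToSphere p ⟨(x, y), h⟩ ∈ ({p, -p} : Set (sphere (0 : E) 1)) ↔
      x = p ∨ y = p := by
  constructor
  · intro hmem
    have hF := norm_smul_sphereNormalize (weightedDiff_ne_zero p h)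
    change sphereNormalize _ (weightedDiff_ne_zero p h) = p ∨
      sphereNormalize _ (weightedDiff_ne_zero p h) = -p at hmem
    rcases hmem with hp | hp <;> rw [hp] at hF
    · exact eq_or_eq_of_weightedDiff_eq_smul h hF.symm
    · refine eq_or_eq_of_weightedDiff_eq_smul h (c := -‖weightedDiff (p : E) (x : E) y‖) ?_
      rw [← hF]
      simp [norm_smul]
  · rintro (rfl | rfl)
    · exact Or.inl (deletedProductToSphere_left x h)
    · right
      rw [deletedProductToSphere_swap y h.symm, deletedProductToSphere_left y h.symm]
      rfl

end SphereDeletedProduct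

/-- Lemma 8: for n ≥ 1 and p ∈ Sⁿ there is an equivariant homotopy
equivalence φ from the deleted product S̃ⁿ = Sⁿ × Sⁿ \ Δ to Sⁿ (φ(y,x) = -φ(x,y)) with
φ⁻¹({p, -p}) = ({p} × (Sⁿ \ {p})) ∪ ((Sⁿ \ {p}) × {p}). -/
theorem deleted_product_equivariant_homotopy_equivalence (n : ℕ) (hn : 1 ≤ n)
    (p : Metric.sphere (0 : EuclideanSpace ℝ (Fin (n + 1))) 1) :
    ∃ φ : C({z : Metric.sphere (0 : EuclideanSpace ℝ (Fin (n + 1))) 1 ×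
              Metric.sphere (0 : EuclideanSpace ℝ (Fin (n + 1))) 1 // z.1 ≠ z.2},
           Metric.sphere (0 : EuclideanSpace ℝ (Fin (n + 1))) 1),
      (∃ ψ : C(Metric.sphere (0 : EuclideanSpace ℝ (Fin (n + 1))) 1,
              {z : Metric.sphere (0 : EuclideanSpace ℝ (Fin (n + 1))) 1 ×
                Metric.sphere (0 : EuclideanSpace ℝ (Fin (n + 1))) 1 // z.1 ≠ z.2}),
        (φ.comp ψ).Homotopic (ContinuousMap.id _) ∧
        (ψ.comp φ).Homotopic (ContinuousMap.id _)) ∧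
      (∀ (x y : Metric.sphere (0 : EuclideanSpace ℝ (Fin (n + 1))) 1) (hxy : x ≠ y),
        φ ⟨(y, x), Ne.symm hxy⟩ = -(φ ⟨(x, y), hxy⟩)) ∧
      ⇑φ ⁻¹' {p, -p} =
        Subtype.val ⁻¹'
          (({p} : Set (Metric.sphere (0 : EuclideanSpace ℝ (Fin (n + 1))) 1)) ×ˢ {p}ᶜ ∪
            ({p}ᶜ : Set (Metric.sphere (0 : EuclideanSpace ℝ (Fin (n + 1))) 1)) ×ˢ {p}) := by
  refine ⟨deletedProductToSphere p, ⟨sphereAntidiagonal _, ?_, ?_⟩, ?_, ?_⟩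
  · rw [deletedProductToSphere_comp_antidiagonal]
  · exact ⟨(deletedProductHomotopy p).symm⟩
  · exact fun x y hxy => deletedProductToSphere_swap p hxy
  · ext ⟨⟨x, y⟩, hxy⟩
    refine (deletedProductToSphere_mem_iff p hxy).trans ?_
    simp only [Set.mem_preimage, Set.mem_union, Set.mem_prod, Set.mem_singleton_iff,
      Set.mem_compl_iff]
    grind
end

section
/- Let n ≥ 1 and let S̃ⁿ = { (x,y) ∈ Sⁿ × Sⁿ : x ≠ y } with the subspace topology, and let ∇ = { (x, −x) : x ∈ Sⁿ } ⊂ S̃ⁿ be the antidiagonal. Then ∇ is an equivariant strong deformation retract of S̃ⁿ: there exists a continuous map H : S̃ⁿ × [0,1] → S̃ⁿ such that H(z, 0) = z for all z, H(z, 1) ∈ ∇ for all z, H((x,−x), t) = (x,−x) for all x ∈ Sⁿ and t ∈ [0,1], and H(τ(z), t) = τ(H(z, t)) for all z and t, where τ(x,y) = (y,x). -/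
open unitInterval

section AntidiagonalRetraction

variable {E : Type*} [NormedAddCommGroup E] [InnerProductSpace ℝ E]

lemma norm_sub_smul_comm_of_norm_eq {x y : E} (h : ‖x‖ = ‖y‖) (t : ℝ) :
    ‖x - t • y‖ = ‖y - t • x‖ := by
  rw [← sq_eq_sq₀ (norm_nonneg _) (norm_nonneg _), norm_sub_sq_real, norm_sub_sq_real,
    norm_smul, norm_smul, real_inner_smul_right, real_inner_smul_right, real_inner_comm, h]

lemma sub_smul_ne_zero_of_norm_eq_one {x y : E} (hx : ‖x‖ = 1) (hy : ‖y‖ = 1) (hxy : x ≠ y)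
    {t : ℝ} (ht : 0 ≤ t) : x - t • y ≠ 0 := by
  intro h
  have hxt : x = t • y := sub_eq_zero.mp h
  have ht1 : t = 1 := by
    simpa [hxt, norm_smul, hy, abs_of_nonneg ht] using hx
  exact hxy (by simpa [ht1] using hxt)

/-- The point of the unit sphere in the direction of `x - t • y`, for distinct unit vectors
`x`, `y` and `0 ≤ t`. -/
noncomputable def pushAway (x y : Metric.sphere (0 : E) 1) (hxy : x ≠ y) (t : unitInterval) :
    Metric.sphere (0 : E) 1 :=
  ⟨‖(x : E) - (t : ℝ) • (y : E)‖⁻¹ • ((x : E) - (t : ℝ) • (y : E)), by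
    have h : (x : E) - (t : ℝ) • (y : E) ≠ 0 :=
      sub_smul_ne_zero_of_norm_eq_one (norm_eq_of_mem_sphere x) (norm_eq_of_mem_sphere y)
        (Subtype.coe_injective.ne hxy) t.2.1
    simp [norm_smul, inv_mul_cancel₀ (norm_ne_zero_iff.mpr h)]⟩

lemma pushAway_ne_swap (x y : Metric.sphere (0 : E) 1) (hxy : x ≠ y) (t : unitInterval) :
    pushAway x y hxy t ≠ pushAway y x hxy.symm t := by
  intro h
  have hx : ‖(x : E)‖ = 1 := norm_eq_of_mem_sphere x
  have hy : ‖(y : E)‖ = 1 := norm_eq_of_mem_sphere y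
  have hne : (y : E) - (t : ℝ) • (x : E) ≠ 0 :=
    sub_smul_ne_zero_of_norm_eq_one hy hx (Subtype.coe_injective.ne hxy.symm) t.2.1
  have hcoe := congrArg (Subtype.val : Metric.sphere (0 : E) 1 → E) h
  simp only [pushAway] at hcoe
  rw [norm_sub_smul_comm_of_norm_eq (hx.trans hy.symm)] at hcoe
  have heq : (x : E) - (t : ℝ) • (y : E) = y - (t : ℝ) • (x : E) :=
    smul_right_injective E (inv_ne_zero (norm_ne_zero_iff.mpr hne)) hcoe
  have hzero : (1 + (t : ℝ)) • ((x : E) - y) = 0 := by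
    linear_combination (norm := module) heq
  have ht : 1 + (t : ℝ) ≠ 0 := by linarith [t.2.1]
  exact hxy (Subtype.ext (sub_eq_zero.mp ((smul_eq_zero.mp hzero).resolve_left ht)))

lemma pushAway_zero (x y : Metric.sphere (0 : E) 1) (hxy : x ≠ y) :
    pushAway x y hxy 0 = x := by
  ext1
  simp [pushAway]

lemma pushAway_one_swap (x y : Metric.sphere (0 : E) 1) (hxy : x ≠ y) :
    pushAway y x hxy.symm 1 = -pushAway x y hxy 1 := by
  ext1
  simp only [pushAway, coe_neg_sphere, Set.Icc.coe_one, one_smul]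
  rw [norm_sub_rev, ← smul_neg, neg_sub]

lemma pushAway_of_eq_neg (x y : Metric.sphere (0 : E) 1) (hxy : x ≠ y) (h : y = -x)
    (t : unitInterval) : pushAway x y hxy t = x := by
  subst h
  have ht : 0 < 1 + (t : ℝ) := by linarith [t.2.1]
  have hsub : (x : E) - (t : ℝ) • ((-x : Metric.sphere (0 : E) 1) : E)
      = (1 + (t : ℝ)) • (x : E) := by
    rw [coe_neg_sphere]
    module
  ext1
  simp only [pushAway]
  rw [hsub, norm_smul, norm_eq_of_mem_sphere x, mul_one, Real.norm_of_nonneg ht.le,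
    inv_smul_smul₀ ht.ne']

lemma Continuous.pushAway {X : Type*} [TopologicalSpace X] {f g : X → Metric.sphere (0 : E) 1}
    {t : X → unitInterval} (hf : Continuous f) (hg : Continuous g) (ht : Continuous t)
    (hfg : ∀ a, f a ≠ g a) : Continuous fun a => pushAway (f a) (g a) (hfg a) (t a) := by
  refine Continuous.subtype_mk (Continuous.smul (Continuous.inv₀ (by fun_prop) fun a => ?_)
    (by fun_prop)) _
  exact norm_ne_zero_iff.mpr (sub_smul_ne_zero_of_norm_eq_one (norm_eq_of_mem_sphere _)
    (norm_eq_of_mem_sphere _) (Subtype.coe_injective.ne (hfg a)) (t a).2.1)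

end AntidiagonalRetraction

/-- proof of Lemma 8: the antidiagonal ∇ = {(x, -x)} is an equivariant
strong deformation retract of the deleted product S̃ⁿ = Sⁿ × Sⁿ \ Δ. -/
theorem antidiagonal_equivariant_deformation_retract (n : ℕ) (hn : 1 ≤ n) :
    ∃ H : {z : Metric.sphere (0 : EuclideanSpace ℝ (Fin (n + 1))) 1 ×
            Metric.sphere (0 : EuclideanSpace ℝ (Fin (n + 1))) 1 // z.1 ≠ z.2} × unitInterval →
          {z : Metric.sphere (0 : EuclideanSpace ℝ (Fin (n + 1))) 1 ×
            Metric.sphere (0 : EuclideanSpace ℝ (Fin (n + 1))) 1 // z.1 ≠ z.2},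
      Continuous H ∧
      (∀ z, H (z, 0) = z) ∧
      (∀ z, ((H (z, 1)).val.2 : Metric.sphere (0 : EuclideanSpace ℝ (Fin (n + 1))) 1)
              = -((H (z, 1)).val.1)) ∧
      (∀ (x : Metric.sphere (0 : EuclideanSpace ℝ (Fin (n + 1))) 1)
          (hx : ((x, -x) : Metric.sphere (0 : EuclideanSpace ℝ (Fin (n + 1))) 1 ×
                  Metric.sphere (0 : EuclideanSpace ℝ (Fin (n + 1))) 1).1 ≠ (x, -x).2)
          (t : unitInterval), H (⟨(x, -x), hx⟩, t) = ⟨(x, -x), hx⟩) ∧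
      (∀ (z : {z : Metric.sphere (0 : EuclideanSpace ℝ (Fin (n + 1))) 1 ×
                Metric.sphere (0 : EuclideanSpace ℝ (Fin (n + 1))) 1 // z.1 ≠ z.2})
          (t : unitInterval),
        ((H (⟨Prod.swap z.val, Ne.symm z.prop⟩, t)).val : _) = Prod.swap ((H (z, t)).val)) := by
  refine ⟨fun p => ⟨(pushAway p.1.val.1 p.1.val.2 p.1.prop p.2,
    pushAway p.1.val.2 p.1.val.1 p.1.prop.symm p.2), pushAway_ne_swap _ _ p.1.prop _⟩,
    ?_, ?_, ?_, ?_, ?_⟩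
  · exact (Continuous.prodMk (Continuous.pushAway (by fun_prop) (by fun_prop) (by fun_prop) _)
      (Continuous.pushAway (by fun_prop) (by fun_prop) (by fun_prop) _)).subtype_mk _
  · intro z
    exact Subtype.ext (Prod.ext (pushAway_zero _ _ z.prop) (pushAway_zero _ _ z.prop.symm))
  · intro z
    exact pushAway_one_swap _ _ z.prop
  · intro x hx t
    exact Subtype.ext (Prod.ext (pushAway_of_eq_neg _ _ hx rfl t)
      (pushAway_of_eq_neg _ _ hx.symm (neg_neg x).symm t))
  · intro z t
    rfl
end

section
/- Let G be a finite group acting freely by homeomorphisms on a nonempty connected Hausdorff topological space X (freely: g • x = x implies g = 1). Let Σ = { (x,y) ∈ X × X : x ≠ y and ∃ g ∈ G, y = g • x } with the subspace topology; this is the double point set Σ_q of the quotient map q : X → X/G, i.e. Σ = { (x,y) : x ≠ y and q(x) = q(y) }. Then: (1) the connected components of Σ are exactly the sets Γ_g = { (x, g • x) : x ∈ X } for g ∈ G with g ≠ 1, and these sets are pairwise distinct; (2) the swap involution τ(x,y) = (y,x) maps Γ_g onto Γ_{g⁻¹}; consequently a component Γ_g is τ-invariant if and only if g² = 1. -/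
/-- The double point set of the quotient map X → X/G of a group action: pairs of distinct
points lying in the same orbit. -/
def doublePointSet (G : Type*) {X : Type*} [Group G] [MulAction G X] : Set (X × X) :=
  {z | z.1 ≠ z.2 ∧ ∃ g : G, z.2 = g • z.1}

/-- The subset Γ_g = {(x, g • x)} of the double point set. -/
def gammaComponent {G X : Type*} [Group G] [MulAction G X] (g : G) :
    Set (doublePointSet G (X := X)) :=
  {z | z.val.2 = g • z.val.1}

/-- The factor-exchanging involution τ(x,y) = (y,x) on the double point set. -/
def tauSwap {G X : Type*} [Group G] [MulAction G X] :
    doublePointSet G (X := X) → doublePointSet G (X := X) := fun z =>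
  ⟨Prod.swap z.val, by
    obtain ⟨hne, g, hg⟩ := z.prop
    exact ⟨Ne.symm hne, g⁻¹, by simp [Prod.swap, hg]⟩⟩

section FreeAction

variable {G X : Type*} [Group G] [MulAction G X]

theorem ne_one_of_mem_gammaComponent {g : G} {z : doublePointSet G (X := X)}
    (hz : z ∈ gammaComponent g) : g ≠ 1 := by
  rintro rfl
  exact z.prop.1 (by simpa using hz.symm)

theorem exists_mem_gammaComponent (z : doublePointSet G (X := X)) :
    ∃ g : G, z ∈ gammaComponent g :=
  z.prop.2

theorem eq_of_smul_eq_smul_of_free (hfree : ∀ (g : G) (x : X), g • x = x → g = 1)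
    {g h : G} {x : X} (hx : g • x = h • x) : g = h :=
  (inv_mul_eq_one.mp (hfree (h⁻¹ * g) x (by rw [mul_smul, hx, inv_smul_smul]))).symm

theorem eq_of_mem_gammaComponent (hfree : ∀ (g : G) (x : X), g • x = x → g = 1)
    {g h : G} {z : doublePointSet G (X := X)}
    (hg : z ∈ gammaComponent g) (hh : z ∈ gammaComponent h) : g = h :=
  eq_of_smul_eq_smul_of_free hfree (hg.symm.trans hh)

/-- The section `x ↦ (x, g • x)` of the first projection, for `g ≠ 1` acting freely. -/
def graphPoint (hfree : ∀ (g : G) (x : X), g • x = x → g = 1) {g : G} (hg : g ≠ 1) (x : X) :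
    doublePointSet G (X := X) :=
  ⟨(x, g • x), fun hx => hg (hfree g x hx.symm), g, rfl⟩

theorem range_graphPoint (hfree : ∀ (g : G) (x : X), g • x = x → g = 1) {g : G} (hg : g ≠ 1) :
    Set.range (graphPoint hfree hg) = gammaComponent g := by
  ext z
  constructor
  · rintro ⟨x, rfl⟩
    rfl
  · intro hz
    exact ⟨z.val.1, Subtype.ext (Prod.ext rfl hz.symm)⟩

theorem gammaComponent_nonempty [Nonempty X] (hfree : ∀ (g : G) (x : X), g • x = x → g = 1)
    {g : G} (hg : g ≠ 1) : (gammaComponent (X := X) g).Nonempty :=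
  range_graphPoint hfree hg ▸ Set.range_nonempty _

theorem gammaComponent_injOn [Nonempty X] (hfree : ∀ (g : G) (x : X), g • x = x → g = 1) :
    Set.InjOn (gammaComponent (X := X)) {g : G | g ≠ 1} := by
  intro g hg h _ hgh
  obtain ⟨z, hz⟩ := gammaComponent_nonempty hfree hg
  exact eq_of_mem_gammaComponent hfree hz (hgh ▸ hz)

theorem tauSwap_involutive : Function.Involutive (tauSwap (G := G) (X := X)) :=
  fun _ => rfl

theorem tauSwap_image_gammaComponent (g : G) :
    tauSwap '' gammaComponent (X := X) g = gammaComponent g⁻¹ := by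
  rw [tauSwap_involutive.image_eq_preimage_symm]
  ext z
  change z.val.1 = g • z.val.2 ↔ z.val.2 = g⁻¹ • z.val.1
  rw [eq_inv_smul_iff, eq_comm]

variable [TopologicalSpace X] [ContinuousConstSMul G X]

theorem isClosed_gammaComponent [T2Space X] (g : G) : IsClosed (gammaComponent (X := X) g) :=
  isClosed_eq (continuous_snd.comp continuous_subtype_val)
    ((continuous_fst.comp continuous_subtype_val).const_smul g)

theorem isClopen_gammaComponent [Finite G] [T2Space X]
    (hfree : ∀ (g : G) (x : X), g • x = x → g = 1) (g : G) :
    IsClopen (gammaComponent (X := X) g) := by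
  refine ⟨isClosed_gammaComponent g, isClosed_compl_iff.mp ?_⟩
  have hcompl : (gammaComponent (X := X) g)ᶜ = ⋃ h ∈ {h : G | h ≠ g}, gammaComponent h := by
    ext z
    simp only [Set.mem_compl_iff, Set.mem_iUnion, Set.mem_ofPred_eq, exists_prop]
    constructor
    · intro hz
      obtain ⟨h, hh⟩ := exists_mem_gammaComponent z
      exact ⟨h, fun heq => hz (heq ▸ hh), hh⟩
    · rintro ⟨h, hne, hh⟩ hz
      exact hne (eq_of_mem_gammaComponent hfree hh hz)
  rw [hcompl]
  exact (Set.toFinite _).isClosed_biUnion fun h _ => isClosed_gammaComponent h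

theorem isPreconnected_gammaComponent [PreconnectedSpace X]
    (hfree : ∀ (g : G) (x : X), g • x = x → g = 1) {g : G} (hg : g ≠ 1) :
    IsPreconnected (gammaComponent (X := X) g) := by
  rw [← range_graphPoint hfree hg]
  exact isPreconnected_range
    ((continuous_id.prodMk (continuous_const_smul g)).subtype_mk _)

theorem connectedComponent_eq_gammaComponent [Finite G] [T2Space X] [PreconnectedSpace X]
    (hfree : ∀ (g : G) (x : X), g • x = x → g = 1) {g : G} {z : doublePointSet G (X := X)}
    (hz : z ∈ gammaComponent g) : connectedComponent z = gammaComponent g :=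
  ((isClopen_gammaComponent hfree g).connectedComponent_subset hz).antisymm
    ((isPreconnected_gammaComponent hfree
      (ne_one_of_mem_gammaComponent hz)).subset_connectedComponent hz)

end FreeAction

/-- Example 3: for a free action of a finite group G on a nonempty connected
Hausdorff space X by homeomorphisms, the connected components of the double point set of
the quotient map X → X/G are exactly the graphs Γ_g = {(x, g • x)}, g ≠ 1, which are
pairwise distinct; the swap involution τ maps Γ_g onto Γ_{g⁻¹}, so Γ_g is τ-invariant iff
g² = 1. -/
theorem components_of_double_point_set_of_free_action
    {G X : Type*} [Group G] [Finite G] [TopologicalSpace X] [T2Space X] [ConnectedSpace X]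
    [MulAction G X] [ContinuousConstSMul G X]
    (hfree : ∀ (g : G) (x : X), g • x = x → g = 1) :
    ({C : Set (doublePointSet G (X := X)) | ∃ z, C = connectedComponent z}
        = {C | ∃ g : G, g ≠ 1 ∧ C = gammaComponent g}) ∧
    (∀ g₁ g₂ : G, g₁ ≠ 1 → g₂ ≠ 1 →
        gammaComponent (X := X) g₁ = gammaComponent g₂ → g₁ = g₂) ∧
    (∀ g : G, tauSwap '' gammaComponent (X := X) g = gammaComponent g⁻¹) ∧
    (∀ g : G, g ≠ 1 →
        (tauSwap '' gammaComponent (X := X) g = gammaComponent g ↔ g ^ 2 = 1)) := by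
  refine ⟨?_, fun g₁ g₂ h₁ h₂ h => gammaComponent_injOn hfree h₁ h₂ h,
    tauSwap_image_gammaComponent, fun g hg => ?_⟩
  · ext C
    constructor
    · rintro ⟨z, rfl⟩
      obtain ⟨g, hz⟩ := exists_mem_gammaComponent z
      exact ⟨g, ne_one_of_mem_gammaComponent hz, connectedComponent_eq_gammaComponent hfree hz⟩
    · rintro ⟨g, hg, rfl⟩
      obtain ⟨z, hz⟩ := gammaComponent_nonempty (X := X) hfree hg
      exact ⟨z, (connectedComponent_eq_gammaComponent hfree hz).symm⟩
  · rw [tauSwap_image_gammaComponent,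
      (gammaComponent_injOn hfree).eq_iff (inv_ne_one.mpr hg) hg, inv_eq_iff_mul_eq_one, sq]
end
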